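/- Let W≥0 and h>0 with h ≥ max_i max(P_{i+1}^{n−1}−P_i^{n−1}, P_{i+1}ⁿ−P_iⁿ), and assume |w_i| ≤ W for all i∈{1,…,N_p}. Define η(t)(x) := φ(x,t) − (Π_h(t)φ(·,t))(x), ηⁿ := η(tⁿ), ηⁿ⁻¹ := η(t^{n−1}). Then there exists a constant C>0 depending only on W (independent of Δt, h, the nodes, N_p, and φ) such that for every φ:[a,b]×[t^{n−1},tⁿ]→ℝ whose partial derivatives ∂_t^j∂_x^kφ exist and are continuous for all j≤1, k≤2: (1/Δt)·( ∫_a^b (ηⁿ(x)−ηⁿ⁻¹(x))² dx )^{1/2} ≤ (C·h/√Δt) · ( Σ_{j=0}^{1} Σ_{k=0}^{2} ∫_{t^{n−1}}^{tⁿ} ∫_a^b (∂_t^j∂_x^kφ(x,t))² dx dt )^{1/2}. -/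

import Mathlib

open MeasureTheory

/-- The continuous piecewise-affine hat function associated with node `i` of the
strictly increasing partition `Q 1 < Q 2 < … < Q N`. -/
noncomputable def hatFun (Q : ℕ → ℝ) (N i : ℕ) (x : ℝ) : ℝ :=
  max 0 (min
    ((x - (if i = 1 then Q 1 - 1 else Q (i - 1))) /
      (Q i - (if i = 1 then Q 1 - 1 else Q (i - 1))))
    (((if i = N then Q N + 1 else Q (i + 1)) - x) /
      ((if i = N then Q N + 1 else Q (i + 1)) - Q i)))

/-- The P1 Lagrange interpolant of `f` on the partition `Q 1 < … < Q N`. -/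
noncomputable def interp (Q : ℕ → ℝ) (N : ℕ) (f : ℝ → ℝ) (x : ℝ) : ℝ :=
  ∑ i ∈ Finset.Icc 1 N, f (Q i) * hatFun Q N i x

/-- Partial derivative in the first (spatial) variable. -/
noncomputable def pdx (F : ℝ → ℝ → ℝ) : ℝ → ℝ → ℝ := fun x t => deriv (fun y => F y t) x

/-- Partial derivative in the second (temporal) variable. -/
noncomputable def pdt (F : ℝ → ℝ → ℝ) : ℝ → ℝ → ℝ := fun x t => deriv (fun s => F x s) t

/-!
Inside a moving cell the interpolant is the affine function through the two endpoint values, so the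
time derivative of the error is the interpolation error of `∂ₜφ` minus a convex combination of the
terms `wᵢ(∂ₓφ(Pᵢ) - m)`, where `m` is the slope of the interpolant. By the mean value theorem
`m = ∂ₓφ(ξ)` for some `ξ` in the cell, so everything is an increment over the cell, and
Cauchy–Schwarz bounds `(∂ₜη)²` by `2h` times the integral over the cell of
`(∂ₜ∂ₓφ)² + W²(∂ₓ²φ)²`. At a fixed point `x` the error is continuous in time, and for almost every
`x` a node passes through `x` at only countably many times. Integrating in time with Cauchy–Schwarz,
and then over `x` with Fubini, gives a second factor `h` from the length of each cell.
-/

section IncrementEstimates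

open Set

lemma sq_convexCombination_le {θ u v c : ℝ} (hθ : θ ∈ Icc 0 1) (hu : u ^ 2 ≤ c) (hv : v ^ 2 ≤ c) :
    ((1 - θ) * u + θ * v) ^ 2 ≤ c := by
  nlinarith [hθ.1, hθ.2, mul_nonneg (mul_nonneg hθ.1 (sub_nonneg.2 hθ.2)) (sq_nonneg (u - v))]

lemma intervalIntegrable_of_sq_le {a b : ℝ} {f g : ℝ → ℝ} (hab : a ≤ b)
    (hf : AEStronglyMeasurable f (volume.restrict (Ioc a b)))
    (hg : IntervalIntegrable g volume a b)
    (hfg : ∀ᵐ x ∂volume.restrict (Ioc a b), f x ^ 2 ≤ g x) :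
    IntervalIntegrable f volume a b := by
  rw [intervalIntegrable_iff_integrableOn_Ioc_of_le hab] at hg ⊢
  have hbound : IntegrableOn (fun x => 1 + g x) (Ioc a b) :=
    (integrableOn_const (by simp)).add hg
  refine hbound.mono' hf ?_
  filter_upwards [hfg] with x hx
  rw [Real.norm_eq_abs]
  nlinarith [sq_nonneg (|f x| - 1), sq_abs (f x)]

lemma sq_intervalIntegral_le {a b : ℝ} {f g : ℝ → ℝ} (hab : a ≤ b)
    (hf : IntervalIntegrable f volume a b) (hg : IntervalIntegrable g volume a b)
    (hfg : ∀ᵐ x ∂volume.restrict (Ioc a b), f x ^ 2 ≤ g x) :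
    (∫ x in a..b, f x) ^ 2 ≤ (b - a) * ∫ x in a..b, g x := by
  rcases hab.eq_or_lt with rfl | hlt
  · simp
  set m := (∫ x in a..b, f x) / (b - a)
  have hm : ∫ x in a..b, f x = m * (b - a) := (div_mul_cancel₀ _ (sub_pos.2 hlt).ne').symm
  have htangent : ∫ x in a..b, (2 * m * f x - m ^ 2) ≤ ∫ x in a..b, g x := by
    rw [intervalIntegral.integral_of_le hab, intervalIntegral.integral_of_le hab]
    refine integral_mono_ae ((hf.const_mul _).sub intervalIntegrable_const).1 hg.1 ?_
    filter_upwards [hfg] with x hx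
    nlinarith [sq_nonneg (f x - m)]
  rw [intervalIntegral.integral_sub (hf.const_mul _) intervalIntegrable_const,
    intervalIntegral.integral_const_mul, intervalIntegral.integral_const, smul_eq_mul,
    hm] at htangent
  rw [hm]
  nlinarith

lemma sq_sub_le_of_forall_hasDerivAt {a b u v : ℝ} {f f' : ℝ → ℝ}
    (hf : ∀ x, HasDerivAt f (f' x) x) (hf' : Continuous f') (hu : u ∈ Icc a b)
    (hv : v ∈ Icc a b) : (f v - f u) ^ 2 ≤ (b - a) * ∫ x in a..b, f' x ^ 2 := by
  wlog huv : u ≤ v generalizing u v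
  · rw [← neg_sub, neg_sq]
    exact this hv hu (le_of_not_ge huv)
  have hint : ∀ c d, IntervalIntegrable (fun x => f' x ^ 2) volume c d :=
    (hf'.pow 2).intervalIntegrable
  calc (f v - f u) ^ 2 = (∫ x in u..v, f' x) ^ 2 := by
        rw [intervalIntegral.integral_eq_sub_of_hasDerivAt (fun x _ => hf x)
          (hf'.intervalIntegrable _ _)]
    _ ≤ (v - u) * ∫ x in u..v, f' x ^ 2 :=
        sq_intervalIntegral_le huv (hf'.intervalIntegrable _ _) (hint _ _)
          (.of_forall fun _ => le_rfl)
    _ ≤ (b - a) * ∫ x in a..b, f' x ^ 2 := by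
        refine mul_le_mul (by linarith [hu.1, hv.2])
          (intervalIntegral.integral_mono_interval hu.1 huv hv.2
            (.of_forall fun _ => sq_nonneg _) (hint _ _))
          (intervalIntegral.integral_nonneg huv fun _ _ => sq_nonneg _)
          (by linarith [hu.1, hv.2])

lemma sq_sub_le_of_hasDerivAt_off_countable {f g : ℝ → ℝ} {t₀ t₁ : ℝ} {s : Set ℝ} (ht : t₀ ≤ t₁)
    (hf : ContinuousOn f (Icc t₀ t₁)) (hs : s.Countable)
    (hf' : ∀ t ∈ Ioo t₀ t₁ \ s, ∃ d, HasDerivAt f d t ∧ d ^ 2 ≤ g t)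
    (hg : IntervalIntegrable g volume t₀ t₁) :
    (f t₁ - f t₀) ^ 2 ≤ (t₁ - t₀) * ∫ t in t₀..t₁, g t := by
  have hderiv : ∀ t ∈ Ioo t₀ t₁ \ s, HasDerivAt f (deriv f t) t := fun t htt =>
    (hf' t htt).choose_spec.1.differentiableAt.hasDerivAt
  have hle : ∀ᵐ t ∂volume.restrict (Ioc t₀ t₁), deriv f t ^ 2 ≤ g t := by
    rw [← restrict_Ioo_eq_restrict_Ioc]
    filter_upwards [ae_restrict_mem measurableSet_Ioo, ae_restrict_of_ae (hs.ae_notMem volume)]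
      with t htt hts
    obtain ⟨d, hd, hdg⟩ := hf' t ⟨htt, hts⟩
    rwa [hd.deriv]
  have hint : IntervalIntegrable (deriv f) volume t₀ t₁ :=
    intervalIntegrable_of_sq_le ht (measurable_deriv f).aestronglyMeasurable hg hle
  rw [← integral_eq_of_hasDerivAt_off_countable_of_le f (deriv f) ht hs hf hderiv hint]
  exact sq_intervalIntegral_le ht hint hg hle

lemma integral_sq_sub_le_of_ae_sq_sub_le {f G : ℝ → ℝ → ℝ} {a b t₀ t₁ : ℝ} (hab : a ≤ b)
    (ht : t₀ ≤ t₁)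
    (hG : Integrable (Function.uncurry G)
      ((volume.restrict (Ioc a b)).prod (volume.restrict (Ioc t₀ t₁))))
    (hf : ∀ᵐ x ∂volume.restrict (Ioc a b),
      (f x t₁ - f x t₀) ^ 2 ≤ (t₁ - t₀) * ∫ t in t₀..t₁, G x t) :
    ∫ x in a..b, (f x t₁ - f x t₀) ^ 2 ≤ (t₁ - t₀) * ∫ t in t₀..t₁, ∫ x in a..b, G x t := by
  simp only [intervalIntegral.integral_of_le hab, intervalIntegral.integral_of_le ht] at hf ⊢
  calc ∫ x in Ioc a b, (f x t₁ - f x t₀) ^ 2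
      ≤ ∫ x in Ioc a b, (t₁ - t₀) * ∫ t in Ioc t₀ t₁, G x t :=
        integral_mono_of_nonneg (.of_forall fun _ => sq_nonneg _)
          (hG.integral_prod_left.const_mul _) hf
    _ = (t₁ - t₀) * ∫ t in Ioc t₀ t₁, ∫ x in Ioc a b, G x t := by
        rw [integral_const_mul, integral_integral_swap hG]

/-- By Sard's lemma almost every `c` is a regular value, and the level set of a regular value is
discrete. -/
lemma ae_countable_setOf_eq {q : ℝ → ℝ} (hq : Differentiable ℝ q) :
    ∀ᵐ c, {t | q t = c}.Countable := by
  have hsard : volume (q '' {t | deriv q t = 0}) = 0 := by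
    refine addHaar_image_eq_zero_of_det_fderivWithin_eq_zero volume
      (fun t _ => (hq t).hasDerivAt.hasFDerivAt.hasFDerivWithinAt) fun t ht => ?_
    exact (ContinuousLinearMap.det_toSpanSingleton _).trans ht
  filter_upwards [measure_eq_zero_iff_ae_notMem.1 hsard] with c hc
  refine (HereditarilyLindelofSpace.isLindelof _).countable_of_isDiscrete
    (isDiscrete_iff_nhdsNE.2 fun t ht => ?_)
  have hreg : deriv q t ≠ 0 := fun h0 => hc ⟨t, h0, ht⟩
  exact (Filter.disjoint_principal_right.2 ((hq t).hasDerivAt.eventually_ne hreg)).eq_bot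

end IncrementEstimates

section PartialDerivatives

open Set Function

lemma contDiff_one_uncurry {F : ℝ → ℝ → ℝ}
    (hx : ∀ t, Differentiable ℝ fun x => F x t) (ht : ∀ x, Differentiable ℝ fun t => F x t)
    (hFx : Continuous (uncurry (pdx F))) (hFt : Continuous (uncurry (pdt F))) :
    ContDiff ℝ 1 (uncurry F) := by
  have hcont : ∀ {f : ℝ → ℝ → ℝ}, Continuous (uncurry f) →
      Continuous (uncurry fun x t => ContinuousLinearMap.toSpanSingleton ℝ (f x t)) :=
    fun hf => (ContinuousLinearMap.toSpanSingletonCLE (𝕜 := ℝ) (E := ℝ)).continuous.comp hf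
  have hF := fun p : ℝ × ℝ => (hasStrictFDerivAt_uncurry_coprod (u := p) (f := F)
    (f₁ := fun x t => .toSpanSingleton ℝ (pdx F x t))
    (f₂ := fun x t => .toSpanSingleton ℝ (pdt F x t))
    (.of_forall fun v => (hx v.2 v.1).hasDerivAt.hasFDerivAt)
    (.of_forall fun v => (ht v.1 v.2).hasDerivAt.hasFDerivAt)
    (hcont hFx).continuousAt (hcont hFt).continuousAt).hasFDerivAt
  refine contDiff_one_iff_hasFDerivAt.2 ⟨_, ?_, hF⟩
  exact (ContinuousLinearMap.coprodEquivL (S := ℝ)).continuous.comp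
    ((hcont hFx).prodMk (hcont hFt))

variable {F : ℝ → ℝ → ℝ}

lemma pdx_eq_fderiv (hF : ContDiff ℝ 1 (uncurry F)) (x t : ℝ) :
    pdx F x t = fderiv ℝ (uncurry F) (x, t) (1, 0) :=
  ((hF.differentiable one_ne_zero (x, t)).hasFDerivAt.comp_hasDerivAt (f := fun y => (y, t)) x
    ((hasDerivAt_id x).prodMk (hasDerivAt_const x t))).deriv

lemma pdt_eq_fderiv (hF : ContDiff ℝ 1 (uncurry F)) (x t : ℝ) :
    pdt F x t = fderiv ℝ (uncurry F) (x, t) (0, 1) :=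
  ((hF.differentiable one_ne_zero (x, t)).hasFDerivAt.comp_hasDerivAt (f := fun s => (x, s)) t
    ((hasDerivAt_const t x).prodMk (hasDerivAt_id t))).deriv

lemma continuous_pdx (hF : ContDiff ℝ 1 (uncurry F)) : Continuous (uncurry (pdx F)) := by
  have heq : uncurry (pdx F) = fun p => fderiv ℝ (uncurry F) p (1, 0) :=
    funext fun p => pdx_eq_fderiv hF p.1 p.2
  rw [heq]
  exact (hF.continuous_fderiv one_ne_zero).clm_apply continuous_const

lemma continuous_pdt (hF : ContDiff ℝ 1 (uncurry F)) : Continuous (uncurry (pdt F)) := by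
  have heq : uncurry (pdt F) = fun p => fderiv ℝ (uncurry F) p (0, 1) :=
    funext fun p => pdt_eq_fderiv hF p.1 p.2
  rw [heq]
  exact (hF.continuous_fderiv one_ne_zero).clm_apply continuous_const

lemma hasDerivAt_comp_curve (hF : ContDiff ℝ 1 (uncurry F)) {q : ℝ → ℝ} {v t : ℝ}
    (hq : HasDerivAt q v t) :
    HasDerivAt (fun s => F (q s) s) (pdt F (q t) t + v * pdx F (q t) t) t := by
  have hchain := (hF.differentiable one_ne_zero (q t, t)).hasFDerivAt.comp_hasDerivAt
    (f := fun s => (q s, s)) t (hq.prodMk (hasDerivAt_id t))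
  have hdir : ((v, 1) : ℝ × ℝ) = (0, 1) + v • (1, 0) := by simp
  rwa [hdir, map_add, map_smul, smul_eq_mul, ← pdx_eq_fderiv hF, ← pdt_eq_fderiv hF] at hchain

lemma hasDerivAt_pdx (hF : ContDiff ℝ 1 (uncurry F)) (x t : ℝ) :
    HasDerivAt (fun y => F y t) (pdx F x t) x :=
  ((hF.differentiable one_ne_zero).comp
    (differentiable_id.prodMk (differentiable_const t)) x).hasDerivAt

lemma hasDerivAt_pdt (hF : ContDiff ℝ 1 (uncurry F)) (x t : ℝ) :
    HasDerivAt (fun s => F x s) (pdt F x t) t :=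
  ((hF.differentiable one_ne_zero).comp
    ((differentiable_const x).prodMk differentiable_id) t).hasDerivAt

lemma hasDerivAt_intervalIntegral_pdt (hF : ContDiff ℝ 1 (uncurry F)) (u v t : ℝ) :
    HasDerivAt (fun s => ∫ x in u..v, F x s) (∫ x in u..v, pdt F x t) t := by
  have hslice : ∀ {f : ℝ → ℝ → ℝ}, Continuous (uncurry f) → ∀ s, Continuous fun x => f x s :=
    fun hf s => hf.comp (Continuous.prodMk_left s)
  obtain ⟨M, hM⟩ := (isCompact_uIcc.prod isCompact_Icc).exists_bound_of_continuousOn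
    (s := uIcc u v ×ˢ Icc (t - 1) (t + 1)) (continuous_pdt hF).continuousOn
  exact (intervalIntegral.hasDerivAt_integral_of_dominated_loc_of_deriv_le
    (Icc_mem_nhds (by linarith) (by linarith))
    (.of_forall fun s => (hslice hF.continuous s).aestronglyMeasurable)
    ((hslice hF.continuous t).intervalIntegrable _ _)
    (hslice (continuous_pdt hF) t).aestronglyMeasurable
    (.of_forall fun x hx s hs => hM (x, s) ⟨uIoc_subset_uIcc hx, hs⟩)
    intervalIntegrable_const
    (.of_forall fun x _ s _ => hasDerivAt_pdt hF x s)).2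

lemma hasDerivAt_pdt_fst (hF : ContDiff ℝ 1 (uncurry F))
    (hFx : ContDiff ℝ 1 (uncurry (pdx F))) (x t : ℝ) :
    HasDerivAt (fun y => pdt F y t) (pdt (pdx F) x t) x := by
  have hincr : ∀ y s, F y s = F 0 s + ∫ ξ in 0..y, pdx F ξ s := fun y s => by
    rw [intervalIntegral.integral_eq_sub_of_hasDerivAt (fun ξ _ => hasDerivAt_pdx hF ξ s)
      ((continuous_pdx hF).comp (Continuous.prodMk_left s) |>.intervalIntegrable _ _)]
    ring
  have hpdt : ∀ y, pdt F y t = pdt F 0 t + ∫ ξ in 0..y, pdt (pdx F) ξ t := fun y => by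
    refine HasDerivAt.deriv ?_
    simp only [hincr y]
    exact (hasDerivAt_pdt hF 0 t).add (hasDerivAt_intervalIntegral_pdt hFx 0 y t)
  rw [funext hpdt]
  exact (((continuous_pdt hFx).comp (Continuous.prodMk_left t)).integral_hasStrictDerivAt
    0 x).hasDerivAt.const_add _

end PartialDerivatives

section Partition

open Set

/-- The left foot of the hat function at node `i`; node `1` has the ghost neighbour `Q 1 - 1`, as
in `hatFun`. -/
noncomputable def prevNode (Q : ℕ → ℝ) (i : ℕ) : ℝ := if i = 1 then Q 1 - 1 else Q (i - 1)

/-- The right foot of the hat function at node `i`; node `N` has the ghost neighbour `Q N + 1`, as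
in `hatFun`. -/
noncomputable def nextNode (Q : ℕ → ℝ) (N i : ℕ) : ℝ := if i = N then Q N + 1 else Q (i + 1)

/-- The affine function that agrees with `f` at `A` and at `B`. -/
noncomputable def affineInterp (A B : ℝ) (f : ℝ → ℝ) (x : ℝ) : ℝ :=
  (B - x) / (B - A) * f A + (x - A) / (B - A) * f B

variable {Q : ℕ → ℝ} {N i k : ℕ} {x : ℝ}

lemma prevNode_lt (hQ : StrictMonoOn Q (Icc 1 N)) (hi : i ∈ Icc 1 N) : prevNode Q i < Q i := by
  obtain ⟨h1, hN⟩ := hi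
  unfold prevNode
  split_ifs with h
  · rw [h]
    exact sub_one_lt _
  · exact hQ ⟨by omega, by omega⟩ ⟨h1, hN⟩ (by omega)

lemma lt_nextNode (hQ : StrictMonoOn Q (Icc 1 N)) (hi : i ∈ Icc 1 N) : Q i < nextNode Q N i := by
  obtain ⟨h1, hN⟩ := hi
  unfold nextNode
  split_ifs with h
  · rw [h]
    exact lt_add_one _
  · exact hQ ⟨h1, hN⟩ ⟨by omega, by omega⟩ (by omega)

lemma hatFun_eq_right (hQ : StrictMonoOn Q (Icc 1 N)) (hk : k ∈ Ico 1 N)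
    (hx : x ∈ Icc (Q k) (Q (k + 1))) :
    hatFun Q N k x = (Q (k + 1) - x) / (Q (k + 1) - Q k) := by
  have hprev := prevNode_lt hQ ⟨hk.1, hk.2.le⟩
  have hcell := hQ ⟨hk.1, hk.2.le⟩ ⟨by omega, hk.2⟩ k.lt_succ_self
  have hnext : nextNode Q N k = Q (k + 1) := if_neg hk.2.ne
  change max 0 (min ((x - prevNode Q k) / (Q k - prevNode Q k))
    ((nextNode Q N k - x) / (nextNode Q N k - Q k))) = _
  rw [hnext, min_eq_right, max_eq_right]
  · exact div_nonneg (by linarith [hx.2]) (by linarith)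
  · calc (Q (k + 1) - x) / (Q (k + 1) - Q k) ≤ 1 :=
          div_le_one_of_le₀ (by linarith [hx.1]) (by linarith)
      _ ≤ _ := (one_le_div (by linarith)).2 (by linarith [hx.1])

lemma hatFun_eq_left (hQ : StrictMonoOn Q (Icc 1 N)) (hk : k ∈ Ico 1 N)
    (hx : x ∈ Icc (Q k) (Q (k + 1))) :
    hatFun Q N (k + 1) x = (x - Q k) / (Q (k + 1) - Q k) := by
  have hcell := hQ ⟨hk.1, hk.2.le⟩ ⟨by omega, hk.2⟩ k.lt_succ_self
  have hnext := lt_nextNode (i := k + 1) hQ ⟨by omega, hk.2⟩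
  have hprev : prevNode Q (k + 1) = Q k := if_neg (by have := hk.1; omega)
  change max 0 (min ((x - prevNode Q (k + 1)) / (Q (k + 1) - prevNode Q (k + 1)))
    ((nextNode Q N (k + 1) - x) / (nextNode Q N (k + 1) - Q (k + 1)))) = _
  rw [hprev, min_eq_left, max_eq_right]
  · exact div_nonneg (by linarith [hx.1]) (by linarith)
  · calc (x - Q k) / (Q (k + 1) - Q k) ≤ 1 :=
          div_le_one_of_le₀ (by linarith [hx.2]) (by linarith)
      _ ≤ _ := (one_le_div (by linarith)).2 (by linarith [hx.2])

lemma hatFun_eq_zero (hQ : StrictMonoOn Q (Icc 1 N)) (hi : i ∈ Icc 1 N)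
    (hx : x ≤ prevNode Q i ∨ nextNode Q N i ≤ x) : hatFun Q N i x = 0 := by
  have hprev := prevNode_lt hQ hi
  have hnext := lt_nextNode hQ hi
  refine max_eq_left ?_
  rcases hx with hx | hx
  · exact (min_le_left _ _).trans
      (div_nonpos_of_nonpos_of_nonneg (sub_nonpos.2 hx) (sub_nonneg.2 hprev.le))
  · exact (min_le_right _ _).trans
      (div_nonpos_of_nonpos_of_nonneg (sub_nonpos.2 hx) (sub_nonneg.2 hnext.le))

lemma le_prevNode_or_nextNode_le (hQ : StrictMonoOn Q (Icc 1 N)) (hk : k ∈ Ico 1 N)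
    (hx : x ∈ Icc (Q k) (Q (k + 1))) (hi : i ∈ Icc 1 N) (hik : i ≠ k) (hik' : i ≠ k + 1) :
    x ≤ prevNode Q i ∨ nextNode Q N i ≤ x := by
  obtain ⟨h1k, hkN⟩ := hk
  obtain ⟨h1i, hiN⟩ := hi
  rcases hik.lt_or_gt with hlt | hgt
  · right
    rw [nextNode, if_neg (by omega)]
    exact (hQ.monotoneOn ⟨by omega, by omega⟩ ⟨h1k, hkN.le⟩ (by omega)).trans hx.1
  · left
    rw [prevNode, if_neg (by omega)]
    exact hx.2.trans (hQ.monotoneOn ⟨by omega, hkN⟩ ⟨by omega, by omega⟩ (by omega))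

lemma interp_eq_affineInterp (hQ : StrictMonoOn Q (Icc 1 N)) (hk : k ∈ Ico 1 N)
    (hx : x ∈ Icc (Q k) (Q (k + 1))) (f : ℝ → ℝ) :
    interp Q N f x = affineInterp (Q k) (Q (k + 1)) f x := by
  have hpair : ({k, k + 1} : Finset ℕ) ⊆ Finset.Icc 1 N := by
    simp only [Finset.insert_subset_iff, Finset.singleton_subset_iff, Finset.mem_Icc]
    have := hk.1
    have := hk.2
    omega
  rw [interp, ← Finset.sum_subset hpair, Finset.sum_pair k.lt_succ_self.ne,
    hatFun_eq_right hQ hk hx, hatFun_eq_left hQ hk hx, affineInterp, mul_comm (f _),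
    mul_comm (f _)]
  intro i hi hipair
  simp only [Finset.mem_insert, Finset.mem_singleton, not_or] at hipair
  have hi' : i ∈ Icc 1 N := Finset.mem_Icc.1 hi
  rw [hatFun_eq_zero hQ hi' (le_prevNode_or_nextNode_le hQ hk hx hi' hipair.1 hipair.2), mul_zero]

lemma exists_mem_Ioo_cell (hN : 1 ≤ N) (hx : x ∈ Ioo (Q 1) (Q N))
    (hne : ∀ i ∈ Icc 1 N, Q i ≠ x) :
    ∃ k ∈ Ico 1 N, x ∈ Ioo (Q k) (Q (k + 1)) := by
  by_contra! hcell
  have hlt : ∀ i, 1 ≤ i → i ≤ N → Q i < x := by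
    intro i hi
    induction i, hi using Nat.le_induction with
    | base => exact fun _ => hx.1
    | succ k hk ih =>
      intro hkN
      have hge : Q (k + 1) ≤ x := not_lt.1 fun h => hcell k ⟨hk, hkN⟩ ⟨ih (by omega), h⟩
      exact hge.lt_of_ne (hne _ ⟨by omega, hkN⟩)
  exact (hlt N hN le_rfl).not_gt hx.2

lemma pairwiseDisjoint_Ioo_cell (hQ : StrictMonoOn Q (Icc 1 N)) :
    (Ico 1 N).PairwiseDisjoint fun i => Ioo (Q i) (Q (i + 1)) := by
  intro i hi j hj hij
  wlog hlt : i < j generalizing i j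
  · exact (this hj hi hij.symm (hij.lt_or_gt.resolve_left hlt)).symm
  have hle := hQ.monotoneOn ⟨by omega, hi.2⟩ ⟨hj.1, hj.2.le⟩ (Nat.succ_le_of_lt hlt)
  exact disjoint_left.2 fun _ hyi hyj => (hyi.2.trans_le hle).not_gt hyj.1

end Partition

section AffineInterpolation

open Set

variable {a b x : ℝ} {f f' : ℝ → ℝ}

lemma affineInterp_weight_mem (hx : x ∈ Ioo a b) : (x - a) / (b - a) ∈ Icc (0 : ℝ) 1 :=
  ⟨div_nonneg (by linarith [hx.1]) (by linarith [hx.1, hx.2]),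
    div_le_one_of_le₀ (by linarith [hx.2]) (by linarith [hx.1, hx.2])⟩

lemma affineInterp_weight_compl (hab : a ≠ b) : (b - x) / (b - a) = 1 - (x - a) / (b - a) := by
  have := sub_ne_zero.2 hab.symm
  field_simp
  ring

lemma sq_sub_affineInterp_le (hf : ∀ y, HasDerivAt f (f' y) y) (hf' : Continuous f')
    (hx : x ∈ Ioo a b) :
    (f x - affineInterp a b f x) ^ 2 ≤ (b - a) * ∫ y in a..b, f' y ^ 2 := by
  have hab := hx.1.trans hx.2
  have hxI := Ioo_subset_Icc_self hx
  have hsplit : f x - affineInterp a b f x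
      = (1 - (x - a) / (b - a)) * (f x - f a) + (x - a) / (b - a) * (f x - f b) := by
    rw [affineInterp, affineInterp_weight_compl hab.ne]
    ring
  rw [hsplit]
  exact sq_convexCombination_le (affineInterp_weight_mem hx)
    (sq_sub_le_of_forall_hasDerivAt hf hf' (left_mem_Icc.2 hab.le) hxI)
    (sq_sub_le_of_forall_hasDerivAt hf hf' (right_mem_Icc.2 hab.le) hxI)

lemma sq_convexCombination_mul_deriv_sub_slope_le {f'' : ℝ → ℝ} {u v W : ℝ}
    (hf : ∀ y, HasDerivAt f (f' y) y) (hf' : ∀ y, HasDerivAt f' (f'' y) y)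
    (hf'' : Continuous f'') (hx : x ∈ Ioo a b) (hu : |u| ≤ W) (hv : |v| ≤ W) :
    ((b - x) / (b - a) * (u * (f' a - (f b - f a) / (b - a)))
        + (x - a) / (b - a) * (v * (f' b - (f b - f a) / (b - a)))) ^ 2
      ≤ W ^ 2 * ((b - a) * ∫ y in a..b, f'' y ^ 2) := by
  have hab := hx.1.trans hx.2
  obtain ⟨ξ, hξ, hslope⟩ := exists_hasDerivAt_eq_slope f f' hab
    (fun y _ => (hf y).continuousAt.continuousWithinAt) fun y _ => hf y
  have hend : ∀ y ∈ Icc a b, ∀ w, |w| ≤ W →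
      (w * (f' y - f' ξ)) ^ 2 ≤ W ^ 2 * ((b - a) * ∫ y in a..b, f'' y ^ 2) := by
    intro y hy w hw
    rw [mul_pow]
    exact mul_le_mul (sq_le_sq.2 (hw.trans (le_abs_self W)))
      (sq_sub_le_of_forall_hasDerivAt hf' hf'' (Ioo_subset_Icc_self hξ) hy)
      (sq_nonneg _) (sq_nonneg _)
  rw [← hslope, affineInterp_weight_compl hab.ne]
  exact sq_convexCombination_le (affineInterp_weight_mem hx)
    (hend a (left_mem_Icc.2 hab.le) u hu) (hend b (right_mem_Icc.2 hab.le) v hv)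

end AffineInterpolation

section MovingCell

open Set Function

/-- The density `(∂ₜ∂ₓφ)² + W²(∂ₓ²φ)²` that controls the rate of change of the interpolation error
when the nodes move with speed at most `W`. -/
noncomputable def energyDensity (W : ℝ) (φ : ℝ → ℝ → ℝ) (x t : ℝ) : ℝ :=
  pdt (pdx φ) x t ^ 2 + W ^ 2 * pdx (pdx φ) x t ^ 2

variable {φ : ℝ → ℝ → ℝ} {A B : ℝ → ℝ} {wA wB W t x : ℝ}

lemma continuous_energyDensity (hφx : ContDiff ℝ 1 (uncurry (pdx φ))) :
    Continuous (uncurry (energyDensity W φ)) :=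
  ((continuous_pdt hφx).pow 2).add (((continuous_pdx hφx).pow 2).const_mul _)

lemma energyDensity_nonneg (W : ℝ) (φ : ℝ → ℝ → ℝ) (x t : ℝ) : 0 ≤ energyDensity W φ x t := by
  unfold energyDensity
  positivity

lemma integral_energyDensity (hφx : ContDiff ℝ 1 (uncurry (pdx φ))) (W a b t : ℝ) :
    ∫ x in a..b, energyDensity W φ x t =
      (∫ x in a..b, pdt (pdx φ) x t ^ 2) + W ^ 2 * ∫ x in a..b, pdx (pdx φ) x t ^ 2 := by
  have hxt := (continuous_pdt hφx).comp (Continuous.prodMk_left t)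
  have hxx := (continuous_pdx hφx).comp (Continuous.prodMk_left t)
  rw [← intervalIntegral.integral_const_mul]
  exact intervalIntegral.integral_add ((hxt.pow 2).intervalIntegrable _ _)
    (((hxx.pow 2).const_mul _).intervalIntegrable _ _)

lemma hasDerivAt_affineInterp (hφ : ContDiff ℝ 1 (uncurry φ)) (hA : HasDerivAt A wA t)
    (hB : HasDerivAt B wB t) (hAB : A t ≠ B t) (x : ℝ) :
    HasDerivAt (fun s => affineInterp (A s) (B s) (fun y => φ y s) x)
      (affineInterp (A t) (B t) (fun y => pdt φ y t) x
        + ((B t - x) / (B t - A t)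
            * (wA * (pdx φ (A t) t - (φ (B t) t - φ (A t) t) / (B t - A t)))
          + (x - A t) / (B t - A t)
            * (wB * (pdx φ (B t) t - (φ (B t) t - φ (A t) t) / (B t - A t))))) t := by
  have hne : B t - A t ≠ 0 := sub_ne_zero.2 hAB.symm
  have hweightA := (hB.sub_const x).div (hB.sub hA) hne
  have hweightB := (hA.const_sub x).div (hB.sub hA) hne
  refine ((hweightA.mul (hasDerivAt_comp_curve hφ hA)).add
    (hweightB.mul (hasDerivAt_comp_curve hφ hB))).congr_deriv ?_
  unfold affineInterp
  simp only [Pi.sub_apply, Pi.div_apply]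
  field_simp
  ring

lemma exists_hasDerivAt_sub_affineInterp (hφ : ContDiff ℝ 1 (uncurry φ))
    (hφx : ContDiff ℝ 1 (uncurry (pdx φ))) (hA : HasDerivAt A wA t) (hB : HasDerivAt B wB t)
    (hx : x ∈ Ioo (A t) (B t)) (hwA : |wA| ≤ W) (hwB : |wB| ≤ W) :
    ∃ d, HasDerivAt (fun s => φ x s - affineInterp (A s) (B s) (fun y => φ y s) x) d t ∧
      d ^ 2 ≤ 2 * (B t - A t) * ∫ ξ in A t..B t, energyDensity W φ ξ t := by
  have hAB : A t < B t := hx.1.trans hx.2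
  have hxt := (continuous_pdt hφx).comp (Continuous.prodMk_left t)
  have hxx := (continuous_pdx hφx).comp (Continuous.prodMk_left t)
  refine ⟨_, (hasDerivAt_pdt hφ x t).sub (hasDerivAt_affineInterp hφ hA hB hAB.ne x), ?_⟩
  have hfrozen := sq_sub_affineInterp_le (fun y => hasDerivAt_pdt_fst hφ hφx y t) hxt hx
  have htransport := sq_convexCombination_mul_deriv_sub_slope_le
    (fun y => hasDerivAt_pdx hφ y t) (fun y => hasDerivAt_pdx hφx y t) hxx hx hwA hwB
  rw [integral_energyDensity hφx, ← sub_sub, sub_eq_add_neg _ (_ + _)]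
  refine add_sq_le.trans ?_
  rw [neg_sq]
  linarith

end MovingCell

section PiecewiseConst

open Set Function

/-- The function with the constant value `c i` on the open cell `(Q i, Q (i + 1))`, `1 ≤ i < N`, and
the value `0` elsewhere. -/
noncomputable def piecewiseConst (Q : ℕ → ℝ) (N : ℕ) (c : ℕ → ℝ) (x : ℝ) : ℝ :=
  ∑ i ∈ Finset.Ico 1 N, (Ioo (Q i) (Q (i + 1))).indicator (fun _ => c i) x

variable {N : ℕ}

lemma piecewiseConst_of_mem {Q : ℕ → ℝ} {k : ℕ} {x : ℝ} (hQ : StrictMonoOn Q (Icc 1 N))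
    (hk : k ∈ Ico 1 N) (hx : x ∈ Ioo (Q k) (Q (k + 1))) (c : ℕ → ℝ) :
    piecewiseConst Q N c x = c k := by
  rw [piecewiseConst, Finset.sum_eq_single_of_mem k (Finset.mem_Ico.2 hk), indicator_of_mem hx]
  intro i hi hik
  have hdisj := pairwiseDisjoint_Ioo_cell hQ (Finset.mem_Ico.1 hi) hk hik
  exact indicator_of_notMem (fun hxi => disjoint_left.1 hdisj hxi hx) _

lemma integral_piecewiseConst {Q : ℕ → ℝ} (hQ : StrictMonoOn Q (Icc 1 N)) (hN : 1 ≤ N)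
    (c : ℕ → ℝ) :
    ∫ x in Q 1..Q N, piecewiseConst Q N c x
      = ∑ i ∈ Finset.Ico 1 N, (Q (i + 1) - Q i) * c i := by
  have hcell : ∀ i ∈ Finset.Ico 1 N, Q 1 ≤ Q i ∧ Q i ≤ Q (i + 1) ∧ Q (i + 1) ≤ Q N := by
    intro i hi
    obtain ⟨h1, h2⟩ := Finset.mem_Ico.1 hi
    exact ⟨hQ.monotoneOn ⟨le_rfl, hN⟩ ⟨h1, h2.le⟩ h1,
      hQ.monotoneOn ⟨h1, h2.le⟩ ⟨by omega, h2⟩ i.le_succ,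
      hQ.monotoneOn ⟨by omega, h2⟩ ⟨hN, le_rfl⟩ h2⟩
  simp only [piecewiseConst]
  rw [intervalIntegral.integral_of_le (hQ.monotoneOn ⟨le_rfl, hN⟩ ⟨hN, le_rfl⟩ hN),
    integral_finsetSum _ fun i _ => (integrable_const _).indicator measurableSet_Ioo]
  refine Finset.sum_congr rfl fun i hi => ?_
  obtain ⟨h1, h2, h3⟩ := hcell i hi
  rw [setIntegral_indicator measurableSet_Ioo,
    inter_eq_right.2 (Ioo_subset_Ioc_self.trans (Ioc_subset_Ioc h1 h3)), setIntegral_const,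
    smul_eq_mul, measureReal_def, Real.volume_Ioo, ENNReal.toReal_ofReal (sub_nonneg.2 h2)]

lemma integrable_indicator_Ioo {p q c : ℝ → ℝ} (hp : Continuous p) (hq : Continuous q)
    (hc : Continuous c) (a b t₀ t₁ : ℝ) :
    Integrable (uncurry fun x t => (Ioo (p t) (q t)).indicator (fun _ => c t) x)
      ((volume.restrict (Ioc a b)).prod (volume.restrict (Ioc t₀ t₁))) := by
  have hopen : IsOpen {z : ℝ × ℝ | z.1 ∈ Ioo (p z.2) (q z.2)} :=
    (isOpen_lt (hp.comp continuous_snd) continuous_fst).inter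
      (isOpen_lt continuous_fst (hq.comp continuous_snd))
  rw [Measure.prod_restrict]
  exact (((hc.comp continuous_snd).continuousOn.integrableOn_compact
    (isCompact_Icc.prod isCompact_Icc)).mono_set
      (prod_mono Ioc_subset_Icc_self Ioc_subset_Icc_self)).indicator hopen.measurableSet

lemma integrable_piecewiseConst {Q : ℝ → ℕ → ℝ} {c : ℝ → ℕ → ℝ}
    (hQ : ∀ i ∈ Icc 1 N, Continuous fun t => Q t i)
    (hc : ∀ i ∈ Ico 1 N, Continuous fun t => c t i) (a b t₀ t₁ : ℝ) :
    Integrable (uncurry fun x t => piecewiseConst (Q t) N (c t) x)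
      ((volume.restrict (Ioc a b)).prod (volume.restrict (Ioc t₀ t₁))) := by
  suffices h : Integrable (fun z : ℝ × ℝ => ∑ i ∈ Finset.Ico 1 N,
      (Ioo (Q z.2 i) (Q z.2 (i + 1))).indicator (fun _ => c z.2 i) z.1)
      ((volume.restrict (Ioc a b)).prod (volume.restrict (Ioc t₀ t₁))) from h
  refine integrable_finsetSum _ fun i hi => ?_
  have hi' := Finset.mem_Ico.1 hi
  exact integrable_indicator_Ioo (hQ i ⟨hi'.1, hi'.2.le⟩) (hQ (i + 1) ⟨by omega, hi'.2⟩)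
    (hc i hi') a b t₀ t₁

end PiecewiseConst

section MovingMesh

open Set Function

/-- The interpolation error `η(t)(x) = φ(x,t) - (Π_h(t)φ(·,t))(x)` on the mesh with node `i` at
position `Q t i` at time `t`. -/
noncomputable def interpError (Q : ℝ → ℕ → ℝ) (N : ℕ) (φ : ℝ → ℝ → ℝ) (x t : ℝ) : ℝ :=
  φ x t - interp (Q t) N (fun y => φ y t) x

/-- A moving partition `a = Q t 1 < ⋯ < Q t N = b` of `[a, b]`, `t ∈ [t₀, t₁]`, of width at most
`h`, whose nodes have differentiable trajectories `t ↦ Q t i` and speed at most `W`. The values of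
`Q t` outside `{1, …, N}` are irrelevant. -/
structure IsMovingMesh (Q : ℝ → ℕ → ℝ) (N : ℕ) (a b t₀ t₁ h W : ℝ) : Prop where
  one_lt : 1 < N
  differentiable : ∀ i ∈ Icc 1 N, Differentiable ℝ fun t => Q t i
  strictMonoOn : ∀ t ∈ Icc t₀ t₁, StrictMonoOn (Q t) (Icc 1 N)
  left_eq : ∀ t ∈ Icc t₀ t₁, Q t 1 = a
  right_eq : ∀ t ∈ Icc t₀ t₁, Q t N = b
  width_le : ∀ t ∈ Icc t₀ t₁, ∀ i ∈ Ico 1 N, Q t (i + 1) - Q t i ≤ h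
  speed_le : ∀ t ∈ Icc t₀ t₁, ∀ i ∈ Icc 1 N, |deriv (fun s => Q s i) t| ≤ W

/-- The bound on the squared time derivative of the interpolation error in cell `i` at time `t`. -/
noncomputable def cellRateBound (W : ℝ) (φ : ℝ → ℝ → ℝ) (Q : ℝ → ℕ → ℝ) (t : ℝ) (i : ℕ) : ℝ :=
  2 * (Q t (i + 1) - Q t i) * ∫ ξ in Q t i..Q t (i + 1), energyDensity W φ ξ t

lemma continuous_intervalIntegral_of_continuous {f : ℝ → ℝ → ℝ} (hf : Continuous (uncurry f))
    {p q : ℝ → ℝ} (hp : Continuous p) (hq : Continuous q) :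
    Continuous fun t => ∫ x in p t..q t, f x t := by
  have hf' : Continuous (uncurry fun t x => f x t) := hf.comp continuous_swap
  have hsplit : ∀ t, ∫ x in p t..q t, f x t = (∫ x in 0..q t, f x t) - ∫ x in 0..p t, f x t :=
    fun t => (intervalIntegral.integral_interval_sub_left
      ((hf.comp (Continuous.prodMk_left t)).intervalIntegrable _ _)
      ((hf.comp (Continuous.prodMk_left t)).intervalIntegrable _ _)).symm
  simp only [hsplit]
  exact (intervalIntegral.continuous_parametric_intervalIntegral_of_continuous hf' hq).sub
    (intervalIntegral.continuous_parametric_intervalIntegral_of_continuous hf' hp)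

namespace IsMovingMesh

variable {Q : ℝ → ℕ → ℝ} {N : ℕ} {a b t₀ t₁ h W t x : ℝ} {φ : ℝ → ℝ → ℝ}

lemma left_lt_right (hQ : IsMovingMesh Q N a b t₀ t₁ h W) (ht : t₀ ≤ t₁) : a < b := by
  have ht₀ := left_mem_Icc.2 ht
  rw [← hQ.left_eq t₀ ht₀, ← hQ.right_eq t₀ ht₀]
  exact hQ.strictMonoOn t₀ ht₀ ⟨le_rfl, hQ.one_lt.le⟩ ⟨hQ.one_lt.le, le_rfl⟩ hQ.one_lt

lemma width_nonneg (hQ : IsMovingMesh Q N a b t₀ t₁ h W) (ht : t₀ ≤ t₁) : 0 ≤ h := by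
  have ht₀ := left_mem_Icc.2 ht
  have hcell := hQ.strictMonoOn t₀ ht₀ ⟨le_rfl, hQ.one_lt.le⟩ ⟨by omega, hQ.one_lt⟩ one_lt_two
  exact (sub_nonneg.2 hcell.le).trans (hQ.width_le t₀ ht₀ 1 ⟨le_rfl, hQ.one_lt⟩)

lemma continuous_node (hQ : IsMovingMesh Q N a b t₀ t₁ h W) {i : ℕ} (hi : i ∈ Icc 1 N) :
    Continuous fun t => Q t i :=
  (hQ.differentiable i hi).continuous

lemma continuousOn_hatFun (hQ : IsMovingMesh Q N a b t₀ t₁ h W) {i : ℕ} (hi : i ∈ Icc 1 N)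
    (x : ℝ) : ContinuousOn (fun t => hatFun (Q t) N i x) (Icc t₀ t₁) := by
  have hcur := hQ.continuous_node hi
  have hprev : Continuous fun t => prevNode (Q t) i := by
    unfold prevNode
    split_ifs with h1
    · exact (hQ.continuous_node ⟨le_rfl, hQ.one_lt.le⟩).sub continuous_const
    · exact hQ.continuous_node ⟨by have := hi.1; omega, (i.sub_le 1).trans hi.2⟩
  have hnext : Continuous fun t => nextNode (Q t) N i := by
    unfold nextNode
    split_ifs with hN
    · exact (hQ.continuous_node ⟨hQ.one_lt.le, le_rfl⟩).add continuous_const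
    · exact hQ.continuous_node ⟨i.succ_pos, hi.2.lt_of_ne hN⟩
  exact continuousOn_const.sup
    (((continuous_const.sub hprev).continuousOn.div (hcur.sub hprev).continuousOn fun t ht =>
      sub_ne_zero.2 (prevNode_lt (hQ.strictMonoOn t ht) hi).ne').inf
    ((hnext.sub continuous_const).continuousOn.div (hnext.sub hcur).continuousOn fun t ht =>
      sub_ne_zero.2 (lt_nextNode (hQ.strictMonoOn t ht) hi).ne'))

lemma continuousOn_interpError (hQ : IsMovingMesh Q N a b t₀ t₁ h W)
    (hφ : Continuous (uncurry φ)) (x : ℝ) :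
    ContinuousOn (interpError Q N φ x) (Icc t₀ t₁) :=
  (hφ.comp (Continuous.prodMk_right x)).continuousOn.sub <| continuousOn_finsetSum _ fun _ hi =>
    (hφ.comp ((hQ.continuous_node (Finset.mem_Icc.1 hi)).prodMk continuous_id)).continuousOn.mul
      (hQ.continuousOn_hatFun (Finset.mem_Icc.1 hi) x)

lemma exists_hasDerivAt_interpError (hQ : IsMovingMesh Q N a b t₀ t₁ h W)
    (hφ : ContDiff ℝ 1 (uncurry φ)) (hφx : ContDiff ℝ 1 (uncurry (pdx φ)))
    (ht : t ∈ Ioo t₀ t₁) (hx : x ∈ Ioo a b) (hne : ∀ i ∈ Icc 1 N, Q t i ≠ x) :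
    ∃ d, HasDerivAt (interpError Q N φ x) d t ∧
      d ^ 2 ≤ piecewiseConst (Q t) N (cellRateBound W φ Q t) x := by
  have htI := Ioo_subset_Icc_self ht
  obtain ⟨k, hk, hxk⟩ := exists_mem_Ioo_cell hQ.one_lt.le
    (by rwa [hQ.left_eq t htI, hQ.right_eq t htI]) hne
  have hkl : k ∈ Icc 1 N := ⟨hk.1, hk.2.le⟩
  have hkr : k + 1 ∈ Icc 1 N := ⟨k.succ_pos, hk.2⟩
  obtain ⟨d, hd, hdle⟩ := exists_hasDerivAt_sub_affineInterp hφ hφx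
    (hQ.differentiable k hkl t).hasDerivAt (hQ.differentiable (k + 1) hkr t).hasDerivAt hxk
    (hQ.speed_le t htI k hkl) (hQ.speed_le t htI (k + 1) hkr)
  refine ⟨d, hd.congr_of_eventuallyEq ?_, ?_⟩
  · filter_upwards [Ioo_mem_nhds ht.1 ht.2,
      (hQ.continuous_node hkl).continuousAt.eventually_lt_const hxk.1,
      (hQ.continuous_node hkr).continuousAt.eventually_const_lt hxk.2] with s hs hl hr
    rw [interpError, interp_eq_affineInterp (hQ.strictMonoOn s (Ioo_subset_Icc_self hs)) hk
      ⟨hl.le, hr.le⟩]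
  · rwa [piecewiseConst_of_mem (hQ.strictMonoOn t htI) hk hxk]

lemma integrable_cellRateBound (hQ : IsMovingMesh Q N a b t₀ t₁ h W)
    (hφx : ContDiff ℝ 1 (uncurry (pdx φ))) :
    Integrable (uncurry fun x t => piecewiseConst (Q t) N (cellRateBound W φ Q t) x)
      ((volume.restrict (Ioc a b)).prod (volume.restrict (Ioc t₀ t₁))) := by
  refine integrable_piecewiseConst (fun i => hQ.continuous_node) (fun i hi => ?_) a b t₀ t₁
  have hl := hQ.continuous_node (i := i) ⟨hi.1, hi.2.le⟩
  have hr := hQ.continuous_node (i := i + 1) ⟨i.succ_pos, hi.2⟩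
  exact (continuous_const.mul (hr.sub hl)).mul
    (continuous_intervalIntegral_of_continuous (continuous_energyDensity hφx) hl hr)

lemma ae_sq_interpError_sub_le (hQ : IsMovingMesh Q N a b t₀ t₁ h W) (ht : t₀ ≤ t₁)
    (hφ : ContDiff ℝ 1 (uncurry φ)) (hφx : ContDiff ℝ 1 (uncurry (pdx φ))) :
    ∀ᵐ x ∂volume.restrict (Ioc a b),
      (interpError Q N φ x t₁ - interpError Q N φ x t₀) ^ 2 ≤
        (t₁ - t₀) * ∫ t in t₀..t₁, piecewiseConst (Q t) N (cellRateBound W φ Q t) x := by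
  have hlevel : ∀ᵐ x, ∀ i ∈ Icc 1 N, {t | Q t i = x}.Countable :=
    (ae_ball_iff (to_countable _)).2 fun i hi => ae_countable_setOf_eq (hQ.differentiable i hi)
  have hint := (hQ.integrable_cellRateBound hφx).prod_right_ae
  rw [← restrict_Ioo_eq_restrict_Ioc (a := a)] at hint ⊢
  filter_upwards [hint, ae_restrict_of_ae hlevel, ae_restrict_mem measurableSet_Ioo]
    with x hxint hxlevel hx
  refine sq_sub_le_of_hasDerivAt_off_countable ht (hQ.continuousOn_interpError hφ.continuous x)
    ((to_countable _).biUnion hxlevel) (fun t htt => ?_)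
    ((intervalIntegrable_iff_integrableOn_Ioc_of_le ht).2 hxint)
  refine hQ.exists_hasDerivAt_interpError hφ hφx htt.1 hx fun i hi hix => htt.2 ?_
  exact mem_biUnion hi hix

lemma integral_cellRateBound_le (hQ : IsMovingMesh Q N a b t₀ t₁ h W)
    (hφx : ContDiff ℝ 1 (uncurry (pdx φ))) (ht : t ∈ Icc t₀ t₁) :
    ∫ x in a..b, piecewiseConst (Q t) N (cellRateBound W φ Q t) x
      ≤ 2 * h ^ 2 * ∫ x in a..b, energyDensity W φ x t := by
  have hmono := hQ.strictMonoOn t ht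
  rw [← hQ.left_eq t ht, ← hQ.right_eq t ht, integral_piecewiseConst hmono hQ.one_lt.le,
    ← intervalIntegral.sum_integral_adjacent_intervals_Ico
      (f := fun x => energyDensity W φ x t) hQ.one_lt.le fun i _ =>
      ((continuous_energyDensity hφx).comp (Continuous.prodMk_left t)).intervalIntegrable _ _,
    Finset.mul_sum]
  refine Finset.sum_le_sum fun i hi => ?_
  have hi' := Finset.mem_Ico.1 hi
  have hpos := hmono ⟨hi'.1, hi'.2.le⟩ ⟨i.succ_pos, hi'.2⟩ i.lt_succ_self
  have hwidth : (Q t (i + 1) - Q t i) ^ 2 ≤ h ^ 2 :=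
    pow_le_pow_left₀ (sub_nonneg.2 hpos.le) (hQ.width_le t ht i hi') 2
  have henergy : 0 ≤ ∫ ξ in Q t i..Q t (i + 1), energyDensity W φ ξ t :=
    intervalIntegral.integral_nonneg hpos.le fun ξ _ => energyDensity_nonneg W φ ξ t
  calc (Q t (i + 1) - Q t i) * cellRateBound W φ Q t i
      = 2 * (Q t (i + 1) - Q t i) ^ 2 * ∫ ξ in Q t i..Q t (i + 1), energyDensity W φ ξ t := by
        rw [cellRateBound]
        ring
    _ ≤ 2 * h ^ 2 * ∫ ξ in Q t i..Q t (i + 1), energyDensity W φ ξ t := by gcongr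

lemma integral_sq_interpError_sub_le (hQ : IsMovingMesh Q N a b t₀ t₁ h W) (ht : t₀ ≤ t₁)
    (hφ : ContDiff ℝ 1 (uncurry φ)) (hφx : ContDiff ℝ 1 (uncurry (pdx φ))) :
    ∫ x in a..b, (interpError Q N φ x t₁ - interpError Q N φ x t₀) ^ 2
      ≤ (t₁ - t₀) * (2 * h ^ 2 * ∫ t in t₀..t₁, ∫ x in a..b, energyDensity W φ x t) := by
  have hab := (hQ.left_lt_right ht).le
  have hG := hQ.integrable_cellRateBound hφx
  refine (integral_sq_sub_le_of_ae_sq_sub_le hab ht hG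
    (hQ.ae_sq_interpError_sub_le ht hφ hφx)).trans ?_
  rw [← intervalIntegral.integral_const_mul (2 * h ^ 2)]
  refine mul_le_mul_of_nonneg_left (intervalIntegral.integral_mono_on ht ?_ ?_ fun t htt =>
    hQ.integral_cellRateBound_le hφx htt) (sub_nonneg.2 ht)
  · simp only [intervalIntegral.integral_of_le hab]
    exact (intervalIntegrable_iff_integrableOn_Ioc_of_le ht).2 hG.integral_prod_right
  · exact (continuous_const.mul (continuous_intervalIntegral_of_continuous
      (continuous_energyDensity hφx) continuous_const continuous_const)).intervalIntegrable _ _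

end IsMovingMesh

end MovingMesh

section Energy

open Set Function

lemma one_div_mul_sqrt_le {I T Δ c : ℝ} (hΔ : 0 ≤ Δ) (hc : 0 ≤ c) (hI : I ≤ Δ * (c ^ 2 * T)) :
    1 / Δ * √I ≤ c / √Δ * √T := by
  calc 1 / Δ * √I ≤ 1 / Δ * √(Δ * (c ^ 2 * T)) := by gcongr
    _ = √Δ / Δ * (c * √T) := by
        rw [Real.sqrt_mul hΔ, Real.sqrt_mul (sq_nonneg c), Real.sqrt_sq hc]
        ring
    _ = c / √Δ * √T := by
        rw [Real.sqrt_div_self']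
        ring

lemma integral_energyDensity_le {φ : ℝ → ℝ → ℝ} {a b t₀ t₁ : ℝ} (W : ℝ)
    (hφx : ContDiff ℝ 1 (uncurry (pdx φ))) (hab : a ≤ b) (ht : t₀ ≤ t₁) :
    ∫ t in t₀..t₁, ∫ x in a..b, energyDensity W φ x t
      ≤ (1 + W ^ 2) * ∑ j ∈ Finset.range 2, ∑ k ∈ Finset.range 3,
          ∫ t in t₀..t₁, ∫ x in a..b, (pdt^[j] (pdx^[k] φ)) x t ^ 2 := by
  set I : ℕ → ℕ → ℝ := fun j k =>
    ∫ t in t₀..t₁, ∫ x in a..b, (pdt^[j] (pdx^[k] φ)) x t ^ 2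
  have hI_nonneg : ∀ j k, 0 ≤ I j k := fun j k =>
    intervalIntegral.integral_nonneg ht fun t _ =>
      intervalIntegral.integral_nonneg hab fun x _ => sq_nonneg _
  have hI_le : ∀ j ∈ Finset.range 2, ∀ k ∈ Finset.range 3,
      I j k ≤ ∑ j ∈ Finset.range 2, ∑ k ∈ Finset.range 3, I j k := fun j hj k hk =>
    (Finset.single_le_sum (fun k _ => hI_nonneg j k) hk).trans
      (Finset.single_le_sum (f := fun j => ∑ k ∈ Finset.range 3, I j k)
        (fun j _ => Finset.sum_nonneg fun k _ => hI_nonneg j k) hj)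
  have hsq : ∀ {f : ℝ → ℝ → ℝ}, Continuous (uncurry f) →
      IntervalIntegrable (fun t => ∫ x in a..b, f x t ^ 2) volume t₀ t₁ := fun {f} hf =>
    (continuous_intervalIntegral_of_continuous (f := fun x t => f x t ^ 2)
      ((continuous_pow 2).comp hf) continuous_const continuous_const).intervalIntegrable _ _
  have henergy : ∫ t in t₀..t₁, ∫ x in a..b, energyDensity W φ x t = I 1 1 + W ^ 2 * I 0 2 := by
    simp only [integral_energyDensity hφx]
    rw [intervalIntegral.integral_add (hsq (continuous_pdt hφx))
      ((hsq (continuous_pdx hφx)).const_mul _), intervalIntegral.integral_const_mul]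
    rfl
  rw [henergy, add_mul, one_mul]
  exact add_le_add (hI_le 1 (by simp) 1 (by simp))
    (mul_le_mul_of_nonneg_left (hI_le 0 (by simp) 2 (by simp)) (sq_nonneg W))

end Energy

section AffineNodes

open Set

/-- Nodes at positions `P` at time `t₀` that travel with the constant velocities `w`. -/
def affineNodes (P w : ℕ → ℝ) (t₀ t : ℝ) (i : ℕ) : ℝ := P i + w i * (t - t₀)

variable {P w : ℕ → ℝ} {N : ℕ} {a b t₀ Δt h W : ℝ}

lemma affineNodes_self (P w : ℕ → ℝ) (t₀ : ℝ) : affineNodes P w t₀ t₀ = P :=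
  funext fun i => by rw [affineNodes, sub_self, mul_zero, add_zero]

lemma affineNodes_add (P w : ℕ → ℝ) (t₀ Δt : ℝ) :
    affineNodes P w t₀ (t₀ + Δt) = fun i => P i + w i * Δt :=
  funext fun i => by rw [affineNodes, add_sub_cancel_left]

lemma hasDerivAt_affineNodes (P w : ℕ → ℝ) (t₀ t : ℝ) (i : ℕ) :
    HasDerivAt (fun s => affineNodes P w t₀ s i) (w i) t :=
  (((hasDerivAt_id t).sub_const t₀).const_mul (w i)).const_add (P i) |>.congr_deriv (mul_one _)

lemma affineNodes_eq_of_endpoints {c : ℝ} {i : ℕ} (hΔt : Δt ≠ 0) (hP : P i = c)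
    (hP' : P i + w i * Δt = c) (t : ℝ) : affineNodes P w t₀ t i = c := by
  have hw : w i = 0 := by simpa [hP, hΔt] using hP'
  rw [affineNodes, hw, zero_mul, add_zero, hP]

lemma affineNodes_sub_le (hΔt : 0 < Δt) {i j : ℕ} (h₀ : P j - P i ≤ h)
    (h₁ : (P j + w j * Δt) - (P i + w i * Δt) ≤ h) {t : ℝ} (ht : t ∈ Icc t₀ (t₀ + Δt)) :
    affineNodes P w t₀ t j - affineNodes P w t₀ t i ≤ h := by
  have hleft := mul_le_mul_of_nonneg_right h₀ (by linarith [ht.2] : 0 ≤ t₀ + Δt - t)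
  have hright := mul_le_mul_of_nonneg_right h₁ (sub_nonneg.2 ht.1)
  unfold affineNodes
  refine le_of_mul_le_mul_right ?_ hΔt
  linarith

lemma isMovingMesh_affineNodes (hΔt : 0 < Δt) (hN : 1 < N) (ha : P 1 = a) (hb : P N = b)
    (ha' : P 1 + w 1 * Δt = a) (hb' : P N + w N * Δt = b)
    (hmono : ∀ t ∈ Icc t₀ (t₀ + Δt), StrictMonoOn (affineNodes P w t₀ t) (Icc 1 N))
    (hwidth : ∀ i ∈ Ico 1 N,
      P (i + 1) - P i ≤ h ∧ (P (i + 1) + w (i + 1) * Δt) - (P i + w i * Δt) ≤ h)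
    (hspeed : ∀ i ∈ Icc 1 N, |w i| ≤ W) :
    IsMovingMesh (affineNodes P w t₀) N a b t₀ (t₀ + Δt) h W where
  one_lt := hN
  differentiable i _ t := (hasDerivAt_affineNodes P w t₀ t i).differentiableAt
  strictMonoOn := hmono
  left_eq t _ := affineNodes_eq_of_endpoints hΔt.ne' ha ha' t
  right_eq t _ := affineNodes_eq_of_endpoints hΔt.ne' hb hb' t
  width_le _ ht i hi := affineNodes_sub_le hΔt (hwidth i hi).1 (hwidth i hi).2 ht
  speed_le t _ i hi := by
    rw [(hasDerivAt_affineNodes P w t₀ t i).deriv]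
    exact hspeed i hi

end AffineNodes

theorem moving_interpolation_error_time_difference_general {Q : ℝ → ℕ → ℝ} {N : ℕ}
    {a b t₀ t₁ h W : ℝ} {φ : ℝ → ℝ → ℝ} (ht : t₀ < t₁) (hQ : IsMovingMesh Q N a b t₀ t₁ h W)
    (hφ : ContDiff ℝ 1 (Function.uncurry φ)) (hφx : ContDiff ℝ 1 (Function.uncurry (pdx φ))) :
    1 / (t₁ - t₀) * √(∫ x in a..b, (interpError Q N φ x t₁ - interpError Q N φ x t₀) ^ 2)
      ≤ √2 * h / √(t₁ - t₀) * √(∫ t in t₀..t₁, ∫ x in a..b, energyDensity W φ x t) := by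
  refine one_div_mul_sqrt_le (sub_nonneg.2 ht.le) ?_ ?_
  · exact mul_nonneg (Real.sqrt_nonneg 2) (hQ.width_nonneg ht.le)
  · rw [mul_pow, Real.sq_sqrt zero_le_two]
    exact hQ.integral_sq_interpError_sub_le ht.le hφ hφx

/-- **L² estimate for the time difference of the moving-mesh interpolation error**
`η(t) = φ(·,t) − Π_h(t)φ(·,t)`:  `(1/Δt)‖ηⁿ − ηⁿ⁻¹‖_{L²} ≤ C h/√Δt ‖φ‖_{H¹(H²)}`
with `C = C(W)` depending only on the velocity bound `W`. -/
theorem moving_interpolation_error_time_difference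
    (W : ℝ) (hW : 0 ≤ W) :
    ∃ C : ℝ, 0 < C ∧
      ∀ (a b t0 Δt h : ℝ) (N : ℕ) (P w : ℕ → ℝ) (φ : ℝ → ℝ → ℝ),
        a < b → 0 < Δt → 0 < h → 2 ≤ N →
        P 1 = a → P N = b →
        P 1 + w 1 * Δt = a → P N + w N * Δt = b →
        (∀ t ∈ Set.Icc t0 (t0 + Δt), ∀ i j : ℕ, 1 ≤ i → i < j → j ≤ N →
          P i + w i * (t - t0) < P j + w j * (t - t0)) →
        (∀ i : ℕ, 1 ≤ i → i < N →
          P (i + 1) - P i ≤ h ∧ (P (i + 1) + w (i + 1) * Δt) - (P i + w i * Δt) ≤ h) →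
        (∀ i : ℕ, 1 ≤ i → i ≤ N → |w i| ≤ W) →
        -- the partial derivatives ∂_t^j ∂_x^k φ, j ≤ 1, k ≤ 2, exist …
        (∀ k : ℕ, k < 2 → ∀ t : ℝ, Differentiable ℝ fun x => (pdx^[k] φ) x t) →
        (∀ k : ℕ, k ≤ 2 → ∀ x : ℝ, Differentiable ℝ fun t => (pdx^[k] φ) x t) →
        -- … and are continuous
        (∀ j k : ℕ, j ≤ 1 → k ≤ 2 →
          Continuous fun p : ℝ × ℝ => (pdt^[j] (pdx^[k] φ)) p.1 p.2) →
        (1 / Δt) * Real.sqrt (∫ x in a..b,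
            ((φ x (t0 + Δt)
                - interp (fun i => P i + w i * Δt) N (fun y => φ y (t0 + Δt)) x)
              - (φ x t0 - interp P N (fun y => φ y t0) x)) ^ 2)
          ≤ C * h / Real.sqrt Δt *
            Real.sqrt (∑ j ∈ Finset.range 2, ∑ k ∈ Finset.range 3,
              ∫ t in t0..(t0 + Δt), ∫ x in a..b, ((pdt^[j] (pdx^[k] φ)) x t) ^ 2) := by
  refine ⟨√2 * √(1 + W ^ 2), by positivity, ?_⟩
  intro a b t0 Δt h N P w φ hab hΔt hh hN ha hb ha' hb' hmono hwidth hspeed hx ht hc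
  have hφ : ContDiff ℝ 1 (Function.uncurry φ) :=
    contDiff_one_uncurry (hx 0 two_pos) (ht 0 zero_le_two) (hc 0 1 zero_le_one one_le_two)
      (hc 1 0 le_rfl zero_le_two)
  have hφx : ContDiff ℝ 1 (Function.uncurry (pdx φ)) :=
    contDiff_one_uncurry (hx 1 one_lt_two) (ht 1 one_le_two) (hc 0 2 zero_le_one le_rfl)
      (hc 1 1 le_rfl one_le_two)
  have hmesh := isMovingMesh_affineNodes hΔt hN ha hb ha' hb'
    (fun t ht i hi j hj hij => hmono t ht i j hi.1 hij hj.2)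
    (fun i hi => hwidth i hi.1 hi.2) (fun i hi => hspeed i hi.1 hi.2)
  have hgeneral := moving_interpolation_error_time_difference_general
    (lt_add_of_pos_right t0 hΔt) hmesh hφ hφx
  simp only [interpError, affineNodes_self, affineNodes_add, add_sub_cancel_left] at hgeneral
  have henergy := integral_energyDensity_le W hφx hab.le (lt_add_of_pos_right t0 hΔt).le
  refine hgeneral.trans
    ((mul_le_mul_of_nonneg_left (Real.sqrt_le_sqrt henergy) (by positivity)).trans_eq ?_)
  rw [Real.sqrt_mul (by positivity)]
  ring
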